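/- Let s ≥ 2 be an integer, let f be a homogeneous polynomial of degree s in d variables with rational coefficients, and let D = D(f) be the common denominator of its coefficients. Let α = (a₁/q, …, a_d/q) and β = (b₁/r, …, b_d/r) be rational vectors (q, r positive integers, a_i, b_i ∈ ℤ) with f(α − β) ≠ 0. If f(α) = A/q for some integer A, then |f(α − β)| ≥ 1/(D q^{s−1} r^s). -/

import Mathlib

theorem aux_cong {d : ℕ} (g : MvPolynomial (Fin d) ℤ) (q : ℤ) (x y : Fin d → ℤ)
    (h : ∀ i, q ∣ x i - y i) : q ∣ MvPolynomial.eval x g - MvPolynomial.eval y g := by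
  induction g using MvPolynomial.induction_on with
  | C a => simp
  | add p p' h1 h2 =>
    simp only [map_add]
    obtain ⟨u, hu⟩ := h1
    obtain ⟨v, hv⟩ := h2
    exact ⟨u + v, by linear_combination hu + hv⟩
  | mul_X p i h1 =>
    simp only [map_mul, MvPolynomial.eval_X]
    obtain ⟨u, hu⟩ := h1
    obtain ⟨v, hv⟩ := h i
    exact ⟨u * x i + v * MvPolynomial.eval y p,
      by linear_combination x i * hu + MvPolynomial.eval y p * hv⟩

theorem aux_int {d : ℕ} (f : MvPolynomial (Fin d) ℚ) (D : ℕ)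
    (hD : ∀ m ∈ f.support, (f.coeff m).den ∣ D) :
    ∃ g : MvPolynomial (Fin d) ℤ, ∀ x : Fin d → ℤ,
      ((MvPolynomial.eval x g : ℤ) : ℚ) = D * MvPolynomial.eval (fun i => (x i : ℚ)) f := by
  refine ⟨∑ m ∈ f.support, MvPolynomial.monomial m
    ((f.coeff m).num * ((D / (f.coeff m).den : ℕ) : ℤ)), fun x => ?_⟩
  rw [MvPolynomial.eval_eq' (fun i => (x i : ℚ)) f, map_sum, Finset.mul_sum, Int.cast_sum]
  refine Finset.sum_congr rfl fun m hm => ?_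
  rw [MvPolynomial.eval_monomial, Finsupp.prod_fintype _ _ (by simp)]
  obtain ⟨k, hk⟩ := hD m hm
  have hd : (0 : ℕ) < (f.coeff m).den := (f.coeff m).den_pos
  rw [hk, Nat.mul_div_cancel_left _ hd]
  push_cast
  have h2 : ((f.coeff m).den : ℚ) * f.coeff m = (f.coeff m).num := Rat.den_mul_eq_num _
  rw [← h2]; ring

theorem aux_hom {d s : ℕ} (f : MvPolynomial (Fin d) ℚ) (hf : f.IsHomogeneous s) (c : ℚ)
    (x : Fin d → ℚ) :
    MvPolynomial.eval (fun i => c * x i) f = c ^ s * MvPolynomial.eval x f := by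
  rw [MvPolynomial.eval_eq', MvPolynomial.eval_eq', Finset.mul_sum]
  refine Finset.sum_congr rfl fun m hm => ?_
  have h := hf (MvPolynomial.mem_support_iff.mp hm)
  rw [Finsupp.weight_apply, Finsupp.sum_fintype _ _ (by simp)] at h
  simp only [Pi.one_apply, smul_eq_mul, mul_one] at h
  simp only [mul_pow, Finset.prod_mul_distrib, Finset.prod_pow_eq_pow_sum, h]
  ring

/-- Inequality (10) in Lemma 1(i): let `f` be a homogeneous polynomial of degree `s ≥ 2`
with rational coefficients and `D` the common denominator of its coefficients. If
`α = a/q`, `β = b/r` are rational vectors with `f(α - β) ≠ 0` and `f(α) = A/q` for an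
integer `A`, then `|f(α - β)| ≥ 1/(D q^{s-1} r^s)`. -/
theorem simplex_lemma_value_i
    (d s : ℕ) (hs : 2 ≤ s)
    (f : MvPolynomial (Fin d) ℚ) (hhom : f.IsHomogeneous s)
    (D : ℕ) (hD : D = f.support.lcm fun m => (f.coeff m).den)
    (q r : ℤ) (hq : 0 < q) (hr : 0 < r)
    (a b : Fin d → ℤ)
    (hne : MvPolynomial.eval (fun i => (a i : ℚ) / (q : ℚ) - (b i : ℚ) / (r : ℚ)) f ≠ 0)
    (A : ℤ)
    (hA : MvPolynomial.eval (fun i => (a i : ℚ) / (q : ℚ)) f = (A : ℚ) / (q : ℚ)) :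
    |MvPolynomial.eval (fun i => (a i : ℚ) / (q : ℚ) - (b i : ℚ) / (r : ℚ)) f|
      ≥ 1 / ((D : ℚ) * (q : ℚ) ^ (s - 1) * (r : ℚ) ^ s) := by
  have hdv : ∀ m ∈ f.support, (f.coeff m).den ∣ D := fun m hm => by
    rw [hD]; exact Finset.dvd_lcm (f := fun m => (f.coeff m).den) hm
  have hD0 : 0 < D := by
    rw [hD, Nat.pos_iff_ne_zero, Ne, Finset.lcm_eq_zero_iff]
    simp
  obtain ⟨g, hg⟩ := aux_int f D hdv
  have hq' : (0 : ℚ) < q := by exact_mod_cast hq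
  have hr' : (0 : ℚ) < r := by exact_mod_cast hr
  have hDq : (0 : ℚ) < D := by exact_mod_cast hD0
  obtain ⟨t, rfl⟩ : ∃ t, s = t + 2 := ⟨s - 2, by omega⟩
  have h1 : MvPolynomial.eval (fun i => r * a i) g = q * (D * q ^ t * A * r ^ (t + 2)) := by
    have e := hg (fun i => r * a i)
    have e2 := aux_hom f hhom (q * r) (fun i => (a i : ℚ) / q)
    have e3 : (fun i => ((r * a i : ℤ) : ℚ)) = fun i => (q * r : ℚ) * ((a i : ℚ) / q) := by
      funext i; push_cast; field_simp
    rw [e3, e2, hA] at e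
    have : ((MvPolynomial.eval (fun i => r * a i) g : ℤ) : ℚ)
        = ((q * (D * q ^ t * A * r ^ (t + 2)) : ℤ) : ℚ) := by
      rw [e]; push_cast; field_simp; ring
    exact_mod_cast this
  have h2 : q ∣ MvPolynomial.eval (fun i => r * a i - q * b i) g := by
    have := aux_cong g q (fun i => r * a i - q * b i) (fun i => r * a i)
      (fun i => ⟨- b i, by ring⟩)
    have := dvd_add this (Dvd.intro _ h1.symm)
    simpa using this
  obtain ⟨k, hk⟩ := h2
  set F := MvPolynomial.eval (fun i => (a i : ℚ) / (q : ℚ) - (b i : ℚ) / (r : ℚ)) f with hF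
  have h3 : (q * k : ℚ) = D * ((q * r) ^ (t + 2) * F) := by
    have e := hg (fun i => r * a i - q * b i)
    rw [hk] at e
    have e3 : (fun i => ((r * a i - q * b i : ℤ) : ℚ))
        = fun i => (q * r : ℚ) * ((a i : ℚ) / q - (b i : ℚ) / r) := by
      funext i; push_cast; field_simp
    rw [e3, aux_hom f hhom] at e
    rw [Int.cast_mul] at e
    exact e
  have h4 : F * (D * (q : ℚ) ^ (t + 2 - 1) * (r : ℚ) ^ (t + 2)) = k := by
    have : t + 2 - 1 = t + 1 := by omega
    rw [this]
    apply mul_left_cancel₀ hq'.ne'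
    rw [h3]; ring
  have hpos : (0 : ℚ) < D * (q : ℚ) ^ (t + 2 - 1) * (r : ℚ) ^ (t + 2) := by positivity
  have hk0 : k ≠ 0 := by
    rintro rfl
    have := mul_ne_zero hne hpos.ne'
    rw [h4] at this
    simp at this
  rw [ge_iff_le, div_le_iff₀ hpos]
  have : |F| * (D * (q : ℚ) ^ (t + 2 - 1) * (r : ℚ) ^ (t + 2)) = |(k : ℚ)| := by
    rw [← h4, abs_mul, abs_of_pos hpos]
  rw [this]
  exact_mod_cast Int.one_le_abs hk0
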